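/- Let n ≥ 2k, let Ω₁ ⊂ ℝⁿ be a bounded convex open set with smooth boundary, fix x₀ ∈ Ω₁ and M > M₁(Ω₁), and choose ε₀ > 0 with B̄_{ε₀}(x₀) ⊂ Ω₁. For ε ∈ (0, ε₀) let u^ε be the unique strictly k-convex solution of σ_k(D²u^ε) = 1 in Ω₁ \ B̄_ε(x₀), u^ε = 0 on ∂Ω₁, u^ε = −M on ∂B_ε(x₀), and let ũ^ε be its extension by −M on B̄_ε(x₀). Then as ε → 0, ũ^ε converges to ψ uniformly on every compact subset of Ω₁ \ {x₀}, where ψ is the unique strictly k-convex solution of σ_k(D²ψ) = 1 in Ω₁ with ψ = 0 on ∂Ω₁. -/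

import Mathlib

open Set Metric Filter Topology Bornology
open scoped RealInnerProductSpace

noncomputable section

/-- Euclidean `n`-space. -/
abbrev Euc (n : ℕ) := EuclideanSpace ℝ (Fin n)

/-- The `k`-th elementary symmetric polynomial of a vector `lam ∈ ℝⁿ`. -/
def esymmVec {n : ℕ} (k : ℕ) (lam : Fin n → ℝ) : ℝ :=
  ∑ S ∈ Finset.powersetCard k (Finset.univ : Finset (Fin n)), ∏ i ∈ S, lam i

/-- `σ_k(A)`: the `k`-th elementary symmetric polynomial of the eigenvalues of a
symmetric matrix `A` (junk value `0` if `A` is not symmetric). -/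
noncomputable def sigmaMat {n : ℕ} (k : ℕ) (A : Matrix (Fin n) (Fin n) ℝ) : ℝ := by
  classical exact if h : A.IsHermitian then esymmVec k h.eigenvalues else 0

/-- The eigenvalues of the symmetric matrix `A` lie in the Gårding cone
`Γ_k = {λ : σ_j(λ) > 0, j = 1, …, k}`. -/
def InGardingCone {n : ℕ} (k : ℕ) (A : Matrix (Fin n) (Fin n) ℝ) : Prop :=
  ∃ h : A.IsHermitian, ∀ j : ℕ, 1 ≤ j → j ≤ k → 0 < esymmVec j h.eigenvalues

/-- The Hessian matrix of `u` at `x`, with derivatives taken within the set `s`. -/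
noncomputable def hessianWithin {n : ℕ} (u : Euc n → ℝ) (s : Set (Euc n)) (x : Euc n) :
    Matrix (Fin n) (Fin n) ℝ :=
  fun i j => iteratedFDerivWithin ℝ 2 u s x
    ![EuclideanSpace.single i (1:ℝ), EuclideanSpace.single j (1:ℝ)]

/-- The Hessian matrix `D²u(x)` of `u` at `x`. -/
noncomputable def hessian {n : ℕ} (u : Euc n → ℝ) (x : Euc n) : Matrix (Fin n) (Fin n) ℝ :=
  fun i j => iteratedFDeriv ℝ 2 u x
    ![EuclideanSpace.single i (1:ℝ), EuclideanSpace.single j (1:ℝ)]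

/-- Operator norm of the Hessian matrix of `u` at `x` (derivatives within `s`). -/
noncomputable def hessOpNormWithin {n : ℕ} (u : Euc n → ℝ) (s : Set (Euc n)) (x : Euc n) : ℝ :=
  ‖Matrix.toEuclideanCLM (𝕜 := ℝ) (hessianWithin u s x)‖

/-- A set has smooth boundary: it is the sublevel set of a smooth defining function
with nonvanishing differential on the boundary. -/
def HasSmoothBoundary {n : ℕ} (Ω : Set (Euc n)) : Prop :=
  ∃ ρ : Euc n → ℝ, ContDiff ℝ (⊤ : ℕ∞) ρ ∧ Ω = {x | ρ x < 0} ∧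
    ∀ x ∈ frontier Ω, fderiv ℝ ρ x ≠ 0

/-- `c_{n,k} = (C(n,k))^{1/k}` where `C(n,k)` is the binomial coefficient. -/
noncomputable def cnk (n k : ℕ) : ℝ := (n.choose k : ℝ) ^ ((1:ℝ)/(k:ℝ))

/-- The radially symmetric subsolution `|x - x₀|²/(2c_{n,k}) − ε²/(2c_{n,k}) − M`. -/
noncomputable def underSol {n : ℕ} (k : ℕ) (x₀ : Euc n) (ε M : ℝ) (x : Euc n) : ℝ :=
  ‖x - x₀‖^2 / (2 * cnk n k) - ε^2 / (2 * cnk n k) - M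

/-- The closed ring `Ω̄^ε = closure (Ω₁ \ B̄_ε(x₀))`. -/
def ringSet {n : ℕ} (Ω₁ : Set (Euc n)) (x₀ : Euc n) (ε : ℝ) : Set (Euc n) :=
  closure (Ω₁ \ closedBall x₀ ε)

/-- `u` is a strictly `k`-convex solution of problem (2.1):
`σ_k(D²u) = 1` in `Ω^ε = Ω₁ \ B̄_ε(x₀)`, `u = 0` on `∂Ω₁`, `u = −M` on `∂B_ε(x₀)`,
with `u ∈ C²(Ω̄^ε)`. -/
def IsSol {n : ℕ} (k : ℕ) (Ω₁ : Set (Euc n)) (x₀ : Euc n) (ε M : ℝ) (u : Euc n → ℝ) : Prop :=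
  ContDiffOn ℝ 2 u (ringSet Ω₁ x₀ ε) ∧
  (∀ x ∈ Ω₁ \ closedBall x₀ ε,
      InGardingCone k (hessianWithin u (ringSet Ω₁ x₀ ε) x) ∧
      sigmaMat k (hessianWithin u (ringSet Ω₁ x₀ ε) x) = 1) ∧
  (∀ x ∈ frontier Ω₁, u x = 0) ∧
  (∀ x ∈ sphere x₀ ε, u x = -M)

/-- `ψ` is a strictly `k`-convex solution of problem (2.2):
`σ_k(D²ψ) = 1` in `Ω₁`, `ψ = 0` on `∂Ω₁`, with `ψ ∈ C^∞(Ω̄₁)`. -/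
def IsSol22 {n : ℕ} (k : ℕ) (Ω₁ : Set (Euc n)) (ψ : Euc n → ℝ) : Prop :=
  ContDiffOn ℝ (⊤ : ℕ∞) ψ (closure Ω₁) ∧
  (∀ x ∈ Ω₁, InGardingCone k (hessianWithin ψ (closure Ω₁) x) ∧
      sigmaMat k (hessianWithin ψ (closure Ω₁) x) = 1) ∧
  (∀ x ∈ frontier Ω₁, ψ x = 0)

/-- `u` is a strictly `k`-convex solution of the Dirichlet problem on the convex ring
`Ω = Ω₁ \ Ω̄₂`: `σ_k(D²u) = 1` in `Ω`, `u = 0` on `∂Ω₁`, `u = −M` on `∂Ω₂`,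
with `u ∈ C²(Ω̄)`. -/
def IsSolRing {n : ℕ} (k : ℕ) (Ω₁ Ω₂ : Set (Euc n)) (M : ℝ) (u : Euc n → ℝ) : Prop :=
  ContDiffOn ℝ 2 u (closure (Ω₁ \ closure Ω₂)) ∧
  (∀ x ∈ Ω₁ \ closure Ω₂,
      InGardingCone k (hessianWithin u (closure (Ω₁ \ closure Ω₂)) x) ∧
      sigmaMat k (hessianWithin u (closure (Ω₁ \ closure Ω₂)) x) = 1) ∧
  (∀ x ∈ frontier Ω₁, u x = 0) ∧
  (∀ x ∈ frontier Ω₂, u x = -M)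

/-- The extension `ũ` of `u`, equal to `−M` on the closed ball `B̄_ε(x₀)`. -/
noncomputable def extendBy {n : ℕ} (u : Euc n → ℝ) (x₀ : Euc n) (ε M : ℝ) (x : Euc n) : ℝ := by
  classical exact if x ∈ closedBall x₀ ε then -M else u x

/-- The extension `ũ` of `u`, equal to `−M` on the set `Ω₂`. -/
noncomputable def extendOn {n : ℕ} (u : Euc n → ℝ) (Ω₂ : Set (Euc n)) (M : ℝ) (x : Euc n) : ℝ := by
  classical exact if x ∈ Ω₂ then -M else u x

/-- The quadratic polynomial with Hessian `A`, linear part `b` and constant term `c`. -/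
noncomputable def quadPoly {n : ℕ} (A : Matrix (Fin n) (Fin n) ℝ) (b : Euc n) (c : ℝ)
    (x : Euc n) : ℝ :=
  (∑ i, ∑ j, A i j * x i * x j) / 2 + ⟪b, x⟫ + c


open Polynomial in
theorem h_splits_derivative {p : ℝ[X]} (hp : p.Splits) : (derivative p).Splits := by
  by_cases h0 : derivative p = 0
  · rw [h0]; exact Splits.zero
  rw [splits_iff_card_roots]
  have h1 := card_roots_le_derivative p
  have h2 := card_roots' (derivative p)
  have h3 := natDegree_derivative_lt (p := p) (by
    intro h; apply h0; exact derivative_of_natDegree_zero h)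
  rw [splits_iff_card_roots] at hp
  omega

open Polynomial in
theorem h_splits_iter {p : ℝ[X]} (hp : p.Splits) (i : ℕ) : (derivative^[i] p).Splits := by
  induction i with
  | zero => exact hp
  | succ i ih => rw [Function.iterate_succ_apply']; exact h_splits_derivative ih

open Polynomial in
theorem h_newton_ms (s : Multiset ℝ) (t : ℝ) :
    (s.card : ℝ) * ((s.map (fun a => X - C a)).prod.eval t *
      (derivative (derivative (s.map (fun a => X - C a)).prod)).eval t) ≤
    ((s.card : ℝ) - 1) * ((derivative (s.map (fun a => X - C a)).prod).eval t) ^ 2 := by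
  induction s using Multiset.induction_on with
  | empty => simp
  | cons a s ih =>
    rcases Nat.eq_zero_or_pos s.card with h0 | h0
    · rw [Multiset.card_eq_zero] at h0; subst h0; simp
    rw [Multiset.map_cons, Multiset.prod_cons, Multiset.card_cons]
    generalize (s.map (fun a => X - C a)).prod = q at *
    have hd : (0:ℝ) < s.card := by exact_mod_cast h0
    simp only [derivative_mul, derivative_sub, derivative_X, derivative_C, eval_mul, eval_add,
      eval_sub, eval_X, eval_C, sub_zero, one_mul, derivative_add, Nat.cast_add, Nat.cast_one]
    generalize (s.card : ℝ) = d at *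
    generalize hq : eval t q = Q at *
    generalize eval t (derivative q) = Q1 at *
    generalize eval t (derivative (derivative q)) = Q2 at *
    generalize t - a = y at *
    have h1 : 0 ≤ y^2 * ((d-1) * Q1^2 - d * (Q*Q2)) := by
      apply mul_nonneg (sq_nonneg _); linarith
    have h2 : 0 ≤ (d * Q - y * Q1)^2 := sq_nonneg _
    have h3 : 0 ≤ (d+1) * (y^2 * ((d-1) * Q1^2 - d * (Q*Q2))) := by positivity
    rw [← sub_nonneg]
    refine nonneg_of_mul_nonneg_right (a := d) ?_ hd
    nlinarith

open Polynomial in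
theorem h_newton_split {g : ℝ[X]} (hg : g.Splits) (t : ℝ) :
    (g.natDegree : ℝ) * (g.eval t * (derivative (derivative g)).eval t) ≤
    ((g.natDegree : ℝ) - 1) * ((derivative g).eval t) ^ 2 := by
  have h1 := hg.eq_prod_roots
  have h2 := h_newton_ms g.roots t
  rw [splits_iff_card_roots] at hg
  rw [hg] at h2
  generalize (g.roots.map (fun a => X - C a)).prod = q at *
  generalize g.leadingCoeff = c at *
  generalize g.natDegree = d at *
  subst h1
  simp only [derivative_C_mul, eval_C_mul]
  nlinarith [mul_le_mul_of_nonneg_left h2 (sq_nonneg c)]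

/-- Hasse derivative values. -/
def hH (Q : Polynomial ℝ) (i : ℕ) (t : ℝ) : ℝ := (Polynomial.hasseDeriv i Q).eval t

open Polynomial in
theorem hH_fact (Q : ℝ[X]) (i : ℕ) (t : ℝ) :
    (derivative^[i] Q).eval t = (i.factorial : ℝ) * hH Q i t := by
  rw [← factorial_smul_hasseDeriv]; simp [hH]

open Polynomial in
theorem hH_deriv (Q : ℝ[X]) (i : ℕ) (t : ℝ) :
    HasDerivAt (hH Q i) ((i + 1) * hH Q (i+1) t) t := by
  have h := (hasseDeriv i Q).hasDerivAt t
  have h2 : derivative (hasseDeriv i Q) = (i+1) • hasseDeriv (i+1) Q := by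
    have := congrArg (fun f => f Q) (hasseDeriv_comp (R := ℝ) 1 i)
    simp only [LinearMap.comp_apply, hasseDeriv_one, LinearMap.smul_apply] at this
    rw [add_comm 1 i] at this
    simpa using this
  rw [h2] at h
  have h' : HasDerivAt (hH Q i) _ t := h
  convert! h' using 1
  simp [hH]

open Polynomial in
theorem h_natDegree_iter (Q : ℝ[X]) (i : ℕ) :
    (derivative^[i] Q).natDegree = Q.natDegree - i := by
  induction i with
  | zero => simp
  | succ i ih => rw [Function.iterate_succ_apply', natDegree_derivative, ih]; omega

open Polynomial in
theorem hH_newton {Q : ℝ[X]} (hQ : Q.Splits) (i : ℕ) (hi : i + 1 ≤ Q.natDegree) (t : ℝ) :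
    ((Q.natDegree : ℝ) - i) * (i + 2) * (hH Q i t * hH Q (i+2) t) ≤
    ((Q.natDegree : ℝ) - i - 1) * (i + 1) * (hH Q (i+1) t)^2 := by
  have h := h_newton_split (h_splits_iter hQ i) t
  rw [← Function.iterate_succ_apply' derivative, ← Function.iterate_succ_apply' derivative,
    hH_fact, hH_fact, hH_fact, h_natDegree_iter, Nat.cast_sub (by omega)] at h
  have hf : (0:ℝ) < i.factorial := by exact_mod_cast i.factorial_pos
  simp only [Nat.factorial_succ, Nat.succ_eq_add_one] at h
  push_cast at h
  generalize (i.factorial : ℝ) = f at *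
  have hp : 0 < f^2 * (i+1) := by positivity
  refine le_of_mul_le_mul_left ?_ hp
  refine le_trans (le_of_eq ?_) (le_trans h (le_of_eq ?_)) <;> ring

open Polynomial in
theorem hH_taylor (Q : ℝ[X]) (m : ℕ) (t : ℝ) : hH Q m t = (taylor t Q).coeff m := by
  rw [taylor_coeff]; rfl

open Polynomial in
theorem hH_mul_X_add_C (q : ℝ[X]) (a : ℝ) (m : ℕ) (t : ℝ) :
    hH ((X + C a) * q) (m+1) t = (t + a) * hH q (m+1) t + hH q m t := by
  simp only [hH_taylor]
  rw [taylor_mul, map_add, taylor_X, taylor_C, add_assoc, ← C_add, add_mul, coeff_add,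
    coeff_X_mul, coeff_C_mul]
  ring

open Polynomial in
theorem hH_top {q : ℝ[X]} (hq : q.Monic) (t : ℝ) : hH q q.natDegree t = 1 := by
  rw [hH_taylor, coeff_taylor_natDegree]; exact hq

open Polynomial in
theorem hH_above (q : ℝ[X]) (m : ℕ) (hm : q.natDegree < m) (t : ℝ) : hH q m t = 0 := by
  rw [hH_taylor]; apply coeff_eq_zero_of_natDegree_lt; rwa [natDegree_taylor]

open Polynomial in
theorem hH_shift {q : ℝ[X]} {d K : ℕ} (hd : q.natDegree = d) (hK : K ≤ d)
    (hpos : ∀ j, j ≤ K → 0 < hH q (d - j) 0) :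
    ∀ j, j ≤ K → ∀ t, 0 ≤ t → hH q (d - j) 0 ≤ hH q (d - j) t ∧
      (1 ≤ j → 0 < t → hH q (d-j) 0 < hH q (d-j) t) := by
  intro j
  induction j with
  | zero =>
    intro _ t ht
    simp only [Nat.sub_zero]
    have : Monotone (hH q d) := monotone_of_deriv_nonneg
      (fun t => (hH_deriv q d t).differentiableAt) (fun t => by
        rw [(hH_deriv q d t).deriv, hH_above q (d+1) (by omega)]; simp)
    exact ⟨this ht, fun h => absurd h (by omega)⟩
  | succ j ih =>
    intro hj t ht
    have ih' := ih (by omega)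
    have e : d - (j+1) + 1 = d - j := by omega
    have : StrictMonoOn (hH q (d - (j+1))) (Ici 0) := by
      apply strictMonoOn_of_deriv_pos (convex_Ici 0)
        (fun t _ => (hH_deriv q _ t).continuousAt.continuousWithinAt)
      intro t ht
      rw [interior_Ici] at ht
      rw [(hH_deriv q _ t).deriv, e]
      have := (ih' t (le_of_lt ht)).1
      have h2 := hpos j (by omega)
      have h3 : 0 < hH q (d-j) t := by linarith
      positivity
    refine ⟨this.monotoneOn (by simp) (by simpa using ht) ht, fun _ ht' => ?_⟩
    exact this (by simp) (by simpa using ht) ht'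

open Polynomial in
theorem hH_del {q : ℝ[X]} {d k : ℕ} {a : ℝ} (hq : q.Monic) (hs : q.Splits) (hd : q.natDegree = d)
    (hk : k ≤ d) (hpos : ∀ j, j ≤ k → 0 < hH ((X + C a) * q) (d + 1 - j) 0) :
    ∀ j, j < k → 0 < hH q (d - j) 0 := by
  intro j
  induction j with
  | zero => intro _; simp only [Nat.sub_zero]; rw [← hd, hH_top hq]; norm_num
  | succ j ih =>
    intro hj
    have hB := ih (by omega)
    by_contra! hA
    obtain ⟨m, hm⟩ : ∃ m, d = m + (j + 2) := ⟨d - (j+2), by omega⟩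
    have h1 := hpos (j+1) (by omega)
    have h2 := hpos (j+2) (by omega)
    rw [show d + 1 - (j+1) = (m+1)+1 by omega, hH_mul_X_add_C] at h1
    rw [show d + 1 - (j+2) = m+1 by omega, hH_mul_X_add_C] at h2
    rw [show d - j = m+2 by omega] at hB
    rw [show d - (j+1) = m+1 by omega] at hA
    have hN := hH_newton hs m (by omega) 0
    rw [hd, hm] at hN
    push_cast at hN
    rw [show m + 1 + 1 = m+2 by omega] at h1
    generalize hH q (m+1) 0 = A at *
    generalize hH q (m+2) 0 = B at *
    generalize hH q m 0 = Z at *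
    have h3 : A^2 ≤ (-A) * (a * B) := by nlinarith
    have h4 : (-A) * (a*B) < Z * B := by nlinarith
    have h5 : A^2 < Z * B := by linarith
    have h6 : ((m:ℝ) + (j+2) - m - 1) * (m+1) * A^2 ≤ (m + (j+2) - m) * (m+2) * A^2 := by
      apply mul_le_mul_of_nonneg_right _ (sq_nonneg A)
      have : (0:ℝ) ≤ m := by positivity
      have : (0:ℝ) ≤ j := by positivity
      nlinarith
    have h7 : ((m:ℝ) + (j+2) - m) * (m+2) * A^2 < (m + (j+2) - m) * (m+2) * (Z*B) := by
      apply mul_lt_mul_of_pos_left h5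
      have : (m:ℝ) + (j+2) - m = j + 2 := by ring
      rw [this]; positivity
    linarith

open Polynomial in
theorem hH_cone {q : ℝ[X]} {d k : ℕ} {a m : ℝ} (hq : q.Monic) (hs : q.Splits)
    (hd : q.natDegree = d)
    (hk : k ≤ d) (hpos : ∀ j, j ≤ k → 0 < hH ((X + C a) * q) (d + 1 - j) 0)
    (j : ℕ) (hj1 : 1 ≤ j) (hjk : j ≤ k) (hm : m * j ≤ d + 1) (t : ℝ) (ht : 0 ≤ t) :
    hH ((X + C a) * q) (d + 1 - j) 0 ≤
      hH ((X + C a) * q) (d + 1 - j) t - m * t * hH q (d + 1 - j) t := by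
  obtain ⟨i, rfl⟩ : ∃ i, j = i + 1 := ⟨j - 1, by omega⟩
  obtain ⟨e, he⟩ : ∃ e, d = e + (i + 1) := ⟨d - (i+1), by omega⟩
  have hp := hpos (i+1) hjk
  rw [show d + 1 - (i+1) = e+1 by omega] at *
  rw [hH_mul_X_add_C] at *
  rw [hH_mul_X_add_C]
  have hdel := hH_del hq hs hd hk hpos
  have hsh := hH_shift (K := k - 1) hd (by omega) (fun j hj => hdel j (by omega)) i (by omega)
  have hb0 := hdel i (by omega)
  rw [show d - i = e+1 by omega] at *
  have hb : ∀ s, 0 ≤ s → 0 < hH q (e+1) s := fun s hs => lt_of_lt_of_le hb0 (hsh s hs).1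
  have hmono : MonotoneOn (fun s => hH q e s / hH q (e+1) s - (m - 1) * s) (Ici 0) := by
    have hD : ∀ s, 0 ≤ s → HasDerivAt (fun s => hH q e s / hH q (e+1) s - (m - 1) * s)
      ((((e + 1) * hH q (e+1) s) * hH q (e+1) s - hH q e s * (((e+1:ℕ) + 1) * hH q (e+1+1) s)) /
        (hH q (e+1) s)^2 - (m - 1) * 1) s := by
      intro s hs
      exact ((hH_deriv q e s).div (hH_deriv q (e+1) s) (hb s hs).ne').sub
        ((hasDerivAt_id s).const_mul _)
    apply monotoneOn_of_deriv_nonneg (convex_Ici 0)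
    · intro s hs; exact (hD s hs).continuousAt.continuousWithinAt
    · intro s hs; rw [interior_Ici] at hs
      exact (hD s (le_of_lt hs)).differentiableAt.differentiableWithinAt
    · intro s hs'
      rw [interior_Ici] at hs'
      have hs'' : 0 ≤ s := le_of_lt hs'
      rw [(hD s hs'').deriv]
      have hB := hb s hs''
      have hN := hH_newton hs e (by omega) s
      rw [hd, he] at hN
      rw [he] at hm
      push_cast at hN hm ⊢
      rw [show e + 1 + 1 = e + 2 by omega]
      generalize hH q (e+1) s = B at *
      generalize hH q (e+2) s = Z at *
      generalize hH q e s = A at *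
      rw [sub_nonneg, mul_one, le_div_iff₀ (by positivity)]
      have hi : (0:ℝ) < i + 1 := by positivity
      have h1 : (m-1) * (i+1) ≤ e + 1 := by linarith
      refine le_of_mul_le_mul_left ?_ hi
      have h2 := mul_le_mul_of_nonneg_right h1 (sq_nonneg B)
      nlinarith
  have h := hmono (by simp) (by simpa using ht) ht
  simp only [mul_zero, sub_zero] at h
  have hbt := hb t ht
  have h2 := (hsh t ht).1
  generalize hH q (e+1) 0 = B0 at *
  generalize hH q (e+1) t = B at *
  generalize hH q e 0 = A0 at *
  generalize hH q e t = A at *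
  have h3 : (A0 / B0 + (m-1) * t) * B ≤ A := by
    rw [← le_div_iff₀ hbt]; linarith
  have h4 : A0 = A0 / B0 * B0 := by field_simp
  have h5 : 0 < A0 / B0 + a := by
    have : 0 < (A0 / B0 + a) * B0 := by rw [add_mul, ← h4]; linarith
    exact pos_of_mul_pos_left this hb0.le
  nlinarith [mul_le_mul_of_nonneg_left h2 h5.le]

theorem h_det_diag {n : ℕ} (d w : Fin n → ℝ) (s : ℝ) (hd : ∀ i, d i ≠ 0) :
    (Matrix.diagonal d + s • Matrix.vecMulVec w w).det =
      ∏ i, d i + s * ∑ i, (w i)^2 * ∏ l ∈ Finset.univ.erase i, d l := by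
  have h1 : Matrix.diagonal d + s • Matrix.vecMulVec w w = Matrix.diagonal d *
      (1 + Matrix.replicateCol Unit (fun i => s * w i / d i) * Matrix.replicateRow Unit w) := by
    rw [mul_add, mul_one]
    congr 1
    ext i j
    rw [Matrix.diagonal_mul]
    simp [Matrix.vecMulVec_apply, Matrix.mul_apply]
    field_simp [hd i]
  rw [h1, Matrix.det_mul, Matrix.det_diagonal, Matrix.det_one_add_replicateCol_mul_replicateRow,
    mul_add, mul_one, dotProduct, Finset.mul_sum, Finset.mul_sum]
  congr 1
  refine Finset.sum_congr rfl fun i _ => ?_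
  rw [← Finset.mul_prod_erase Finset.univ d (Finset.mem_univ i)]
  field_simp [hd i]

open Polynomial in
/-- The polynomial with roots `-lam i`, `i ∈ s`. -/
def hQ {n : ℕ} (s : Finset (Fin n)) (lam : Fin n → ℝ) : ℝ[X] := ∏ i ∈ s, (X + C (lam i))

open Polynomial in
theorem hQ_monic {n : ℕ} (s : Finset (Fin n)) (lam : Fin n → ℝ) : (hQ s lam).Monic :=
  monic_prod_of_monic _ _ fun _ _ => monic_X_add_C _

open Polynomial in
theorem hQ_deg {n : ℕ} (s : Finset (Fin n)) (lam : Fin n → ℝ) :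
    (hQ s lam).natDegree = s.card := by
  rw [hQ, natDegree_prod_of_monic _ _ fun _ _ => monic_X_add_C _]; simp

open Polynomial in
theorem hQ_splits {n : ℕ} (s : Finset (Fin n)) (lam : Fin n → ℝ) : (hQ s lam).Splits :=
  Splits.prod fun _ _ => Splits.X_add_C _

open Polynomial in
theorem hQ_erase {n : ℕ} (i : Fin n) (lam : Fin n → ℝ) :
    hQ Finset.univ lam = (X + C (lam i)) * hQ (Finset.univ.erase i) lam :=
  (Finset.mul_prod_erase Finset.univ _ (Finset.mem_univ i)).symm

open Polynomial in
theorem h_esymm {n : ℕ} (lam : Fin n → ℝ) (j : ℕ) (hj : j ≤ n) :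
    esymmVec j lam = hH (hQ Finset.univ lam) (n - j) 0 := by
  rw [hH_taylor, taylor_zero, hQ, Finset.prod_X_add_C_coeff _ _ (by simp)]
  simp only [Finset.card_univ, Fintype.card_fin, esymmVec]
  rw [show n - (n - j) = j by omega]

/-- `σ_j` through the characteristic polynomial. -/
def hS {n : ℕ} (j : ℕ) (A : Matrix (Fin n) (Fin n) ℝ) : ℝ := hH (-A).charpoly (n - j) 0

open Polynomial Matrix in
theorem h_rank_one {n : ℕ} {A : Matrix (Fin n) (Fin n) ℝ} (h : A.IsHermitian)
    (v : Fin n → ℝ) : ∃ w : Fin n → ℝ, ∑ i, (w i)^2 = ∑ i, (v i)^2 ∧ ∀ (s τ : ℝ) (m : ℕ),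
      hH (-(A + τ • 1 + s • Matrix.vecMulVec v v)).charpoly m 0 =
        hH (hQ Finset.univ h.eigenvalues) m τ +
          s * ∑ i, (w i)^2 * hH (hQ (Finset.univ.erase i) h.eigenvalues) m τ := by
  set U : Matrix (Fin n) (Fin n) ℝ := (h.eigenvectorUnitary : Matrix (Fin n) (Fin n) ℝ) with hU
  have hUU : U * Uᵀ = 1 := by
    have := (Matrix.mem_unitaryGroup_iff (A := U)).1 h.eigenvectorUnitary.2
    rwa [Matrix.star_eq_conjTranspose, Matrix.conjTranspose_eq_transpose_of_trivial] at this
  have hUU' : Uᵀ * U = 1 := by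
    have := (Matrix.mem_unitaryGroup_iff' (A := U)).1 h.eigenvectorUnitary.2
    rwa [Matrix.star_eq_conjTranspose, Matrix.conjTranspose_eq_transpose_of_trivial] at this
  have hsp : A = U * Matrix.diagonal h.eigenvalues * Uᵀ := by
    have := h.spectral_theorem
    rw [Unitary.conjStarAlgAut_apply] at this
    exact this
  have hv : U.mulVec (Uᵀ.mulVec v) = v := by
    rw [Matrix.mulVec_mulVec, hUU, Matrix.one_mulVec]
  refine ⟨Uᵀ.mulVec v, ?_, ?_⟩
  · have : Uᵀ.mulVec v ⬝ᵥ Uᵀ.mulVec v = v ⬝ᵥ v := by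
      rw [Matrix.dotProduct_mulVec, Matrix.vecMul_transpose, hv]
    simpa [dotProduct, sq] using this
  · generalize Uᵀ.mulVec v = w at *
    intro s τ m
    have key : (-(A + τ • 1 + s • Matrix.vecMulVec v v)).charpoly =
        taylor τ (hQ Finset.univ h.eigenvalues +
          C s * ∑ i, C ((w i)^2) * hQ (Finset.univ.erase i) h.eigenvalues) := by
      apply Polynomial.eq_of_infinite_eval_eq
      have hinf : (((Finset.univ.image (fun i => - (τ + h.eigenvalues i)) : Finset ℝ) :
          Set ℝ)ᶜ).Infinite := (Finset.finite_toSet _).infinite_compl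
      refine hinf.mono ?_
      intro t ht
      have ht' : ∀ i, t + τ + h.eigenvalues i ≠ 0 := by
        intro i hi
        apply ht
        simp only [Finset.coe_image, Finset.coe_univ, image_univ, mem_range]
        exact ⟨i, by linarith⟩
      simp only [mem_ofPred_eq]
      rw [Matrix.eval_charpoly, taylor_eval]
      have e1 : Matrix.scalar (Fin n) t - -(A + τ • 1 + s • Matrix.vecMulVec v v) =
          U * (Matrix.diagonal (fun i => t + τ + h.eigenvalues i) +
            s • Matrix.vecMulVec w w) * Uᵀ := by
        have e2 : Matrix.diagonal (fun i => t + τ + h.eigenvalues i) =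
          (t + τ) • (1 : Matrix (Fin n) (Fin n) ℝ) + Matrix.diagonal h.eigenvalues := by
          ext i j; by_cases hij : i = j <;> simp [hij, Matrix.one_apply]
        have e3 : Matrix.vecMulVec v v = U * Matrix.vecMulVec w w * Uᵀ := by
          rw [Matrix.mul_vecMulVec, Matrix.vecMulVec_mul, Matrix.vecMul_transpose, hv]
        rw [e2, mul_add, mul_add, add_mul, add_mul, ← hsp, mul_smul_comm, mul_one, smul_mul_assoc,
          hUU, mul_smul_comm, smul_mul_assoc, ← e3]
        have : Matrix.scalar (Fin n) t = t • (1 : Matrix (Fin n) (Fin n) ℝ) := by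
          ext i j; simp [Matrix.one_apply, Matrix.diagonal_apply]
        rw [this, add_smul]; abel
      rw [e1, Matrix.det_mul_right_comm, hUU, one_mul, h_det_diag _ _ _ ht']
      simp [hQ, eval_prod, eval_finsetSum, add_assoc]
    rw [hH_taylor, taylor_zero, key, taylor_coeff]
    simp [hH, eval_finsetSum, ← smul_eq_C_mul, -map_pow]

theorem h_hS_shift {n : ℕ} {A : Matrix (Fin n) (Fin n) ℝ} (h : A.IsHermitian) (j : ℕ) (τ : ℝ) :
    hS j (A + τ • 1) = hH (hQ Finset.univ h.eigenvalues) (n - j) τ := by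
  obtain ⟨w, -, hw⟩ := h_rank_one h 0
  have := hw 0 τ (n - j)
  simpa [hS] using this

theorem h_hS_esymm {n : ℕ} {A : Matrix (Fin n) (Fin n) ℝ} (h : A.IsHermitian) (j : ℕ)
    (hj : j ≤ n) : esymmVec j h.eigenvalues = hS j A := by
  have := h_hS_shift h j 0
  simp only [zero_smul, add_zero] at this
  rw [this, h_esymm _ _ hj]

/-- Gårding cone through `hS`. -/
def hG {n : ℕ} (k : ℕ) (A : Matrix (Fin n) (Fin n) ℝ) : Prop :=
  A.IsHermitian ∧ ∀ j, j ≤ k → 0 < hS j A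

theorem h_hS_zero {n : ℕ} (A : Matrix (Fin n) (Fin n) ℝ) : hS 0 A = 1 := by
  have h1 := hH_top (Matrix.charpoly_monic (-A)) 0
  rw [Matrix.charpoly_natDegree_eq_dim] at h1
  simpa [hS] using h1

theorem h_inCone {n k : ℕ} (hk : k ≤ n) {A : Matrix (Fin n) (Fin n) ℝ} (h : InGardingCone k A) :
    hG k A := by
  obtain ⟨hA, h⟩ := h
  refine ⟨hA, fun j hj => ?_⟩
  rcases Nat.eq_zero_or_pos j with rfl | h0
  · rw [h_hS_zero]; norm_num
  · rw [← h_hS_esymm hA j (by omega)]; exact h j h0 hj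

theorem h_sigma {n k : ℕ} (hk : k ≤ n) {A : Matrix (Fin n) (Fin n) ℝ} (h : A.IsHermitian) :
    sigmaMat k A = hS k A := by
  rw [sigmaMat, dif_pos h, h_hS_esymm h k hk]

theorem h_herm_vec {n : ℕ} (v : Fin n → ℝ) : (Matrix.vecMulVec v v).IsHermitian := by
  ext i j; simp [Matrix.vecMulVec_apply, mul_comm]

theorem h_herm_smul {n : ℕ} (c : ℝ) {A : Matrix (Fin n) (Fin n) ℝ} (h : A.IsHermitian) :
    (c • A).IsHermitian := by
  rw [Matrix.IsHermitian, Matrix.conjTranspose_smul, h.eq]; simp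

theorem hG_shift {n k : ℕ} (hk : k ≤ n) {A : Matrix (Fin n) (Fin n) ℝ} (hA : hG k A) {τ : ℝ}
    (hτ : 0 < τ) : hG k (A + τ • 1) ∧ (1 ≤ k → hS k A < hS k (A + τ • 1)) := by
  obtain ⟨h, hp⟩ := hA
  have hdeg : (hQ Finset.univ h.eigenvalues).natDegree = n := by rw [hQ_deg]; simp
  have e0 : ∀ j, hS j A = hH (hQ Finset.univ h.eigenvalues) (n - j) 0 := by
    intro j; simpa using h_hS_shift h j 0
  have hs := hH_shift hdeg hk (fun j hj => by rw [← e0]; exact hp j hj)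
  refine ⟨⟨h.add (h_herm_smul _ Matrix.isHermitian_one), fun j hj => ?_⟩, fun h1 => ?_⟩
  · rw [h_hS_shift h]
    exact lt_of_lt_of_le (by rw [← e0]; exact hp j hj) (hs j hj τ hτ.le).1
  · rw [h_hS_shift h, e0]
    exact (hs k le_rfl τ hτ.le).2 h1 hτ

theorem hG_rank_one {n k : ℕ} (hk : k + 1 ≤ n) {A : Matrix (Fin n) (Fin n) ℝ} (hA : hG k A)
    (v : Fin n → ℝ) :
    hG k (A + Matrix.vecMulVec v v) ∧ ∀ j, j ≤ k → hS j A ≤ hS j (A + Matrix.vecMulVec v v) := by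
  obtain ⟨h, hp⟩ := hA
  have e0 : ∀ j, hS j A = hH (hQ Finset.univ h.eigenvalues) (n - j) 0 := by
    intro j; simpa using h_hS_shift h j 0
  obtain ⟨w, -, hw⟩ := h_rank_one h v
  have hmain : ∀ j, j ≤ k → hS j A ≤ hS j (A + Matrix.vecMulVec v v) := by
    intro j hj
    rcases Nat.eq_zero_or_pos j with rfl | h0
    · rw [h_hS_zero, h_hS_zero]
    have := hw 1 0 (n - j)
    rw [zero_smul, add_zero, one_smul, one_mul, ← e0] at this
    rw [hS.eq_def j (A + _), this, le_add_iff_nonneg_right]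
    refine Finset.sum_nonneg fun i _ => mul_nonneg (sq_nonneg _) ?_
    have hdeg : (hQ (Finset.univ.erase i) h.eigenvalues).natDegree = n - 1 := by
      rw [hQ_deg]; simp
    have := hH_del (a := h.eigenvalues i) (hQ_monic (Finset.univ.erase i) h.eigenvalues)
      (hQ_splits _ _) hdeg
      (k := k) (by omega) (fun j hj => by
        rw [← hQ_erase, show n - 1 + 1 - j = n - j by omega, ← e0]; exact hp j hj) (j - 1) (by omega)
    rw [show n - 1 - (j - 1) = n - j by omega] at this
    exact this.le
  exact ⟨⟨h.add (h_herm_vec v), fun j hj => lt_of_lt_of_le (hp j hj) (hmain j hj)⟩, hmain⟩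

theorem hG_cone {n k : ℕ} (hk : k + 1 ≤ n) {A : Matrix (Fin n) (Fin n) ℝ} (hA : hG k A)
    (v : Fin n → ℝ) (hv : ∑ i, (v i)^2 = 1) (m τ : ℝ) (hτ : 0 ≤ τ) (hm0 : 0 ≤ m)
    (hm : m * k ≤ n) :
    hG k (A + τ • 1 + (-(m * τ)) • Matrix.vecMulVec v v) ∧
      ∀ j, j ≤ k → hS j A ≤ hS j (A + τ • 1 + (-(m * τ)) • Matrix.vecMulVec v v) := by
  obtain ⟨h, hp⟩ := hA
  have e0 : ∀ j, hS j A = hH (hQ Finset.univ h.eigenvalues) (n - j) 0 := by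
    intro j; simpa using h_hS_shift h j 0
  obtain ⟨w, hw1, hw⟩ := h_rank_one h v
  rw [hv] at hw1
  have hmain : ∀ j, j ≤ k → hS j A ≤ hS j (A + τ • 1 + (-(m * τ)) • Matrix.vecMulVec v v) := by
    intro j hj
    rcases Nat.eq_zero_or_pos j with rfl | h0
    · rw [h_hS_zero, h_hS_zero]
    rw [hS, hS, hw, ← hS]
    have : ∀ i, hS j A ≤ hH (hQ Finset.univ h.eigenvalues) (n - j) τ
        - m * τ * hH (hQ (Finset.univ.erase i) h.eigenvalues) (n - j) τ := by
      intro i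
      have hdeg : (hQ (Finset.univ.erase i) h.eigenvalues).natDegree = n - 1 := by
        rw [hQ_deg]; simp
      have hjk : (j:ℝ) ≤ k := by exact_mod_cast hj
      have hn1 : ((n - 1 : ℕ) : ℝ) = n - 1 := by rw [Nat.cast_sub (by omega)]; simp
      have := hH_cone (a := h.eigenvalues i) (m := m)
        (hQ_monic (Finset.univ.erase i) h.eigenvalues) (hQ_splits _ _) hdeg
        (k := k) (by omega) (fun j hj => by
          rw [← hQ_erase, show n - 1 + 1 - j = n - j by omega, ← e0]; exact hp j hj) j h0 hj
          (by rw [hn1]; nlinarith) τ hτ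
      rw [← hQ_erase, show n - 1 + 1 - j = n - j by omega, ← e0] at this
      exact this
    calc hS j A = ∑ i, (w i)^2 * hS j A := by rw [← Finset.sum_mul, hw1, one_mul]
      _ ≤ ∑ i, (w i)^2 * (hH (hQ Finset.univ h.eigenvalues) (n - j) τ
        - m * τ * hH (hQ (Finset.univ.erase i) h.eigenvalues) (n - j) τ) :=
          Finset.sum_le_sum fun i _ => mul_le_mul_of_nonneg_left (this i) (sq_nonneg _)
      _ = _ := by
          simp only [mul_sub, Finset.sum_sub_distrib]
          rw [← Finset.sum_mul, hw1, one_mul, Finset.mul_sum, sub_eq_add_neg,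
            ← Finset.sum_neg_distrib]
          congr 1
          refine Finset.sum_congr rfl fun i _ => ?_
          ring
  refine ⟨⟨(h.add (h_herm_smul _ Matrix.isHermitian_one)).add (h_herm_smul _ (h_herm_vec v)),
    fun j hj => lt_of_lt_of_le (hp j hj) (hmain j hj)⟩, hmain⟩

theorem hG_mono {n k : ℕ} (hk : k + 1 ≤ n) {A B : Matrix (Fin n) (Fin n) ℝ} (hA : hG k A)
    (hB : (B - A).PosSemidef) : hG k B ∧ ∀ j, j ≤ k → hS j A ≤ hS j B := by
  obtain ⟨m, v, hv⟩ := Matrix.posSemidef_iff_eq_sum_vecMulVec.1 hB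
  have key : ∀ s : Finset (Fin m), hG k (A + ∑ i ∈ s, Matrix.vecMulVec (v i) (v i)) ∧
      ∀ j, j ≤ k → hS j A ≤ hS j (A + ∑ i ∈ s, Matrix.vecMulVec (v i) (v i)) := by
    classical
    intro s
    induction s using Finset.induction_on with
    | empty => simpa using hA
    | insert a s ha ih =>
      have h2 := hG_rank_one hk ih.1 (v a)
      rw [Finset.sum_insert ha, add_comm (Matrix.vecMulVec (v a) (v a)), ← add_assoc]
      exact ⟨h2.1, fun j hj => (ih.2 j hj).trans (h2.2 j hj)⟩
  have e : B = A + ∑ i, Matrix.vecMulVec (v i) (v i) := by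
    have : B - A = ∑ i, Matrix.vecMulVec (v i) (v i) := by rw [hv]; simp
    rw [← this]; abel
  rw [e]; exact key _

theorem h_hess_apply {n : ℕ} (f : Euc n → ℝ) (x : Euc n) (i j : Fin n) :
    hessian f x i j = fderiv ℝ (fderiv ℝ f) x (EuclideanSpace.single i (1:ℝ))
      (EuclideanSpace.single j (1:ℝ)) := by
  rw [hessian, iteratedFDeriv_two_apply]; rfl

theorem h_hess_herm {n : ℕ} {f : Euc n → ℝ} {x : Euc n} (hf : ContDiffAt ℝ 2 f x) :
    (hessian f x).IsHermitian := by
  have := hf.isSymmSndFDerivAt (by simp)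
  ext i j
  simp only [Matrix.conjTranspose_apply, star_trivial, h_hess_apply]
  exact this _ _

theorem h_hess_add {n : ℕ} {f g : Euc n → ℝ} {x : Euc n} (hf : ContDiffAt ℝ 2 f x)
    (hg : ContDiffAt ℝ 2 g x) :
    hessian (fun y => f y + g y) x = hessian f x + hessian g x := by
  ext i j
  have := iteratedFDeriv_add_apply (i := 2) (x := x) hf hg
  simp only [hessian, Matrix.add_apply]
  erw [this]; rfl

theorem h_hess_neg {n : ℕ} {f : Euc n → ℝ} {x : Euc n} :
    hessian (fun y => - f y) x = - hessian f x := by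
  ext i j
  have := iteratedFDeriv_neg_apply (𝕜 := ℝ) (i := 2) (f := f) (x := x)
  simp only [hessian, Matrix.neg_apply]
  erw [this]; rfl

theorem h_hess_within {n : ℕ} (f : Euc n → ℝ) {s : Set (Euc n)} {x : Euc n} (hs : s ∈ 𝓝 x) :
    hessianWithin f s x = hessian f x := by
  ext i j
  simp only [hessian, hessianWithin]
  rw [iteratedFDerivWithin_congr_set (Filter.eventuallyEq_univ.mpr hs), iteratedFDerivWithin_univ]

theorem h_quad {n : ℕ} (f : Euc n → ℝ) (x : Euc n) (y : Fin n → ℝ) :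
    y ⬝ᵥ (hessian f x).mulVec y = fderiv ℝ (fderiv ℝ f) x (WithLp.toLp 2 y) (WithLp.toLp 2 y) := by
  have hy : (WithLp.toLp 2 y : Euc n) = ∑ i, y i • EuclideanSpace.single i (1:ℝ) := by
    ext j; simp [Finset.sum_apply, Pi.single_apply]
  rw [hy]
  simp only [map_sum, map_smul, sum_apply, smul_apply,
    dotProduct, Matrix.mulVec, h_hess_apply, smul_eq_mul, Finset.mul_sum]
  rw [Finset.sum_comm]
  refine Finset.sum_congr rfl fun i _ => Finset.sum_congr rfl fun j _ => ?_
  ring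

theorem h_max {n : ℕ} {f : Euc n → ℝ} {x : Euc n} (hf : ContDiffAt ℝ 2 f x)
    (hm : IsLocalMax f x) (y : Euc n) : fderiv ℝ (fderiv ℝ f) x y y ≤ 0 := by
  by_contra! hpos
  set g : ℝ → ℝ := fun t => f (x + t • y) with hg
  have hline : ∀ t : ℝ, HasDerivAt (fun t : ℝ => x + t • y) y t := by
    intro t
    simpa using ((hasDerivAt_id t).smul_const y).const_add x
  have hcont : Tendsto (fun t : ℝ => x + t • y) (𝓝 0) (𝓝 x) := by
    have := (hline 0).continuousAt.tendsto
    simpa using this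
  have hev : ∀ᶠ z in 𝓝 x, DifferentiableAt ℝ f z := by
    filter_upwards [hf.eventually (by simp)] with z hz
    exact hz.differentiableAt (by simp)
  have hd1 : deriv g =ᶠ[𝓝 0] fun t => fderiv ℝ f (x + t • y) y := by
    filter_upwards [hcont.eventually hev] with t ht
    exact (ht.hasFDerivAt.comp_hasDerivAt t (hline t)).deriv
  have hdf : DifferentiableAt ℝ (fderiv ℝ f) x :=
    (hf.fderiv_right (m := 1) (by norm_num)).differentiableAt (by simp)
  have hd2 : deriv (deriv g) 0 = fderiv ℝ (fderiv ℝ f) x y y := by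
    rw [hd1.deriv_eq]
    have h1 : HasFDerivAt (fderiv ℝ f) (fderiv ℝ (fderiv ℝ f) x) (x + (0:ℝ) • y) := by
      simpa using hdf.hasFDerivAt
    have h2 : HasDerivAt (fun t : ℝ => fderiv ℝ f (x + t • y)) (fderiv ℝ (fderiv ℝ f) x y) 0 :=
      h1.comp_hasDerivAt (0:ℝ) (hline 0)
    have h3 : HasDerivAt (fun t : ℝ => fderiv ℝ f (x + t • y) y)
        (fderiv ℝ (fderiv ℝ f) x y y) 0 :=
      ((ContinuousLinearMap.apply ℝ ℝ y).hasFDerivAt).comp_hasDerivAt (0:ℝ) h2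
    exact h3.deriv
  have hgmax : IsLocalMax g 0 := by
    have : ∀ᶠ t in 𝓝 (0:ℝ), f (x + t • y) ≤ f x := hcont.eventually hm
    filter_upwards [this] with t ht
    simpa [hg] using ht
  have hgc : ContinuousAt g 0 := by
    have : ContinuousAt f (x + (0:ℝ) • y) := by simpa using hf.continuousAt
    exact ContinuousAt.comp (f := fun t : ℝ => x + t • y) this (hline 0).continuousAt
  have hgmin := isLocalMin_of_deriv_deriv_pos (f := g) (x₀ := 0) (by rw [hd2]; exact hpos)
    hgmax.deriv_eq_zero hgc
  have hconst : g =ᶠ[𝓝 0] fun _ => g 0 := by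
    filter_upwards [hgmax, hgmin] with t h1 h2
    exact le_antisymm h1 h2
  have : deriv (deriv g) 0 = 0 := by
    rw [hconst.deriv.deriv_eq]; simp
  linarith

theorem h_radial {n : ℕ} {φ φ1 : ℝ → ℝ} {φ2 : ℝ} {x x₀ : Euc n}
    (h1 : ∀ᶠ s in 𝓝 (‖x - x₀‖^2), HasDerivAt φ (φ1 s) s)
    (h2 : HasDerivAt φ1 φ2 (‖x - x₀‖^2)) :
    hessian (fun y => φ (‖y - x₀‖^2)) x =
      (2 * φ1 (‖x - x₀‖^2)) • 1 + (4 * φ2) • Matrix.vecMulVec (x - x₀).ofLp (x - x₀).ofLp := by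
  have hn : ∀ y : Euc n, HasFDerivAt (fun y : Euc n => ‖y - x₀‖^2) (2 • innerSL ℝ (y - x₀)) y := by
    intro y
    have := ((hasFDerivAt_id y).sub_const x₀).norm_sq
    convert! this using 1
  have hd1 : fderiv ℝ (fun y => φ (‖y - x₀‖^2)) =ᶠ[𝓝 x]
      fun y => φ1 (‖y - x₀‖^2) • (2 • innerSL ℝ (y - x₀)) := by
    filter_upwards [(hn x).continuousAt.tendsto.eventually h1] with y hy
    exact (hy.comp_hasFDerivAt y (hn y)).fderiv
  have hin : HasFDerivAt (fun y : Euc n => 2 • innerSL ℝ (y - x₀)) (2 • innerSL ℝ) x := by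
    have := ((innerSL ℝ).hasFDerivAt (x := x - x₀)).comp x ((hasFDerivAt_id x).sub_const x₀)
    exact this.const_smul 2
  have hd2 : HasFDerivAt (fun y => φ1 (‖y - x₀‖^2) • (2 • innerSL ℝ (y - x₀)))
      (φ1 (‖x - x₀‖^2) • 2 • innerSL ℝ +
      (φ2 • 2 • (innerSL ℝ) (x - x₀)).smulRight (2 • (innerSL ℝ) (x - x₀))) x :=
    (h2.comp_hasFDerivAt x (hn x)).smul hin
  ext i j
  rw [h_hess_apply, hd1.fderiv_eq, hd2.fderiv]
  simp [Matrix.vecMulVec_apply, Matrix.one_apply, EuclideanSpace.inner_single_right,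
    EuclideanSpace.inner_single_left]
  have hij_in : (innerSL ℝ (EuclideanSpace.single i (1:ℝ) : Euc n))
      (EuclideanSpace.single j (1:ℝ)) = if i = j then 1 else 0 := by
    rw [innerSL_apply_apply, EuclideanSpace.inner_single_left]
    by_cases h : i = j
    · simp [h]
    · simp [h]
  rw [hij_in]
  by_cases hij : i = j <;> simp [hij] <;> ring

theorem h_compare {n k : ℕ} (hk : 1 ≤ k) (hkn : k + 1 ≤ n) {U : Set (Euc n)} (hUo : IsOpen U)
    (hUb : IsBounded U) {f g : Euc n → ℝ} (hfc : ContinuousOn f (closure U))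
    (hgc : ContinuousOn g (closure U)) (hf2 : ∀ x ∈ U, ContDiffAt ℝ 2 f x)
    (hg2 : ∀ x ∈ U, ContDiffAt ℝ 2 g x)
    (hf : ∀ x ∈ U, hG k (hessian f x) ∧ 1 ≤ hS k (hessian f x))
    (hg : ∀ x ∈ U, hS k (hessian g x) ≤ 1) (hfg : ∀ x ∈ closure U \ U, f x ≤ g x) :
    ∀ x ∈ U, f x ≤ g x := by
  intro z hz
  by_contra! hlt
  have hcpt : IsCompact (closure U) := hUb.isCompact_closure
  obtain ⟨R, hR⟩ := hcpt.isBounded.exists_norm_le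
  have hR0 : 0 ≤ R := (norm_nonneg _).trans (hR z (subset_closure hz))
  set η : ℝ := (f z - g z) / (2 * (R^2 + 1)) with hη
  have hη0 : 0 < η := by
    apply div_pos (by linarith); positivity
  have hηR : η * R^2 < f z - g z := by
    rw [hη, div_mul_eq_mul_div, div_lt_iff₀ (by positivity)]
    have : 0 < f z - g z := by linarith
    nlinarith [mul_nonneg this.le (sq_nonneg R)]
  set w : Euc n → ℝ := fun x => (f x + -g x) + (fun s => η * s) (‖x - 0‖^2) with hw
  have hwc : ContinuousOn w (closure U) := by
    apply (hfc.add hgc.neg).add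
    fun_prop
  obtain ⟨x, hx, hmax⟩ := hcpt.exists_isMaxOn ⟨z, subset_closure hz⟩ hwc
  have hxz : w z ≤ w x := hmax (subset_closure hz)
  have hxU : x ∈ U := by
    by_contra hxU
    have h1 := hfg x ⟨hx, hxU⟩
    have h2 := hR x hx
    have h3 : ‖x‖^2 ≤ R^2 := by gcongr
    have h4 : η * ‖x‖^2 ≤ η * R^2 := by gcongr
    have h5 : 0 ≤ η * ‖z‖^2 := by positivity
    simp only [hw, sub_zero] at hxz
    linarith
  have hloc : IsLocalMax w x :=
    hmax.isLocalMax (mem_of_superset (hUo.mem_nhds hxU) subset_closure)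
  have hr2 : ContDiffAt ℝ 2 (fun x : Euc n => (fun s => η * s) (‖x - 0‖^2)) x := by
    have : ContDiff ℝ 2 (fun x : Euc n => η * ‖x - 0‖^2) :=
      contDiff_const.mul ((contDiff_id.sub contDiff_const).norm_sq ℝ)
    exact this.contDiffAt
  have hfx := hf2 x hxU
  have hgx := hg2 x hxU
  have hfgx : ContDiffAt ℝ 2 (fun y => f y + - g y) x := hfx.add hgx.neg
  have hw2 : ContDiffAt ℝ 2 w x := hfgx.add hr2
  have hrad : hessian (fun x : Euc n => (fun s => η * s) (‖x - 0‖^2)) x = (2 * η) • 1 := by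
    have := h_radial (φ := fun s => η * s) (φ1 := fun _ => η) (φ2 := 0) (x := x) (x₀ := 0)
      (Eventually.of_forall fun s => by simpa using (hasDerivAt_id s).const_mul η)
      (hasDerivAt_const _ _)
    rw [this]; simp
  have hhw : hessian w x = hessian f x + - hessian g x + (2 * η) • 1 := by
    rw [hw, h_hess_add hfgx hr2, h_hess_add hfx hgx.neg, h_hess_neg, hrad]
  have hsh := hG_shift (by omega) (hf x hxU).1 (τ := 2 * η) (by positivity)
  have hpsd : (hessian g x - (hessian f x + (2 * η) • 1)).PosSemidef := by
    refine Matrix.PosSemidef.of_dotProduct_mulVec_nonneg ((h_hess_herm hgx).sub hsh.1.1) ?_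
    intro y
    have e : hessian g x - (hessian f x + (2 * η) • 1) = - hessian w x := by
      rw [hhw]; abel
    rw [e, Matrix.neg_mulVec, dotProduct_neg, star_trivial, h_quad]
    have := h_max hw2 hloc (WithLp.toLp 2 y)
    linarith
  have hmono := (hG_mono hkn hsh.1 hpsd).2 k le_rfl
  have h1 := hsh.2 hk
  have h2 := (hf x hxU).2
  have h3 := hg x hxU
  linarith

theorem h_barrier (m : ℝ) (hm : 2 ≤ m) : ∃ φ : ℝ → ℝ, (∀ s, 0 < s → ContDiffAt ℝ 2 φ s) ∧
    (∀ s, 0 < s → HasDerivAt φ (s ^ (-m/2)) s) ∧ Tendsto φ (𝓝[>] 0) atBot := by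
  rcases hm.eq_or_lt with rfl | hm
  · refine ⟨Real.log, fun s hs => Real.contDiffAt_log.2 hs.ne', fun s hs => ?_,
      Real.tendsto_log_nhdsGT_zero⟩
    convert Real.hasDerivAt_log hs.ne' using 1
    norm_num [Real.rpow_neg_one]
  · refine ⟨fun s => s ^ (1 - m/2) / (1 - m/2), fun s hs => ?_, fun s hs => ?_, ?_⟩
    · exact (Real.contDiffAt_rpow_const_of_ne hs.ne').div_const _
    · have := (Real.hasDerivAt_rpow_const (p := 1 - m/2) (Or.inl hs.ne')).div_const (1 - m/2)
      have hne : 1 - m/2 ≠ 0 := by intro h; linarith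
      have he : s ^ (-m/2) = (1 - m/2) * s ^ (1 - m/2 - 1) / (1 - m/2) := by
        rw [mul_div_cancel_left₀ _ hne]
        congr 1; ring
      rw [he]
      exact this
    · apply Tendsto.atTop_div_const_of_neg (by linarith)
      exact tendsto_rpow_neg_nhdsGT_zero (by linarith)
/-- as `ε → 0⁺`, the extended solutions `ũ^ε` converge to `ψ`
uniformly on compact subsets of `Ω₁ \ {x₀}` (for `n ≥ 2k`). -/
theorem statement19 {n k : ℕ} (hk : 1 ≤ k) (hnk : 2 * k ≤ n)
    (Ω₁ : Set (Euc n)) (hΩo : IsOpen Ω₁) (hΩconv : Convex ℝ Ω₁)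
    (hΩb : IsBounded Ω₁) (hΩs : HasSmoothBoundary Ω₁)
    (x₀ : Euc n) (hx₀ : x₀ ∈ Ω₁)
    (ε₀ : ℝ) (hε₀ : 0 < ε₀) (hball : closedBall x₀ ε₀ ⊆ Ω₁)
    (ψ : Euc n → ℝ) (hψ : IsSol22 k Ω₁ ψ)
    (M₁ : ℝ) (hM₁ : 0 < M₁) (hM₁ψ : ∀ x ∈ closure Ω₁, -ψ x < M₁)
    (hM₁sub : ∀ ε ∈ Ioo (0:ℝ) ε₀, ∀ x ∈ frontier Ω₁, underSol k x₀ ε M₁ x ≤ 0)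
    (M : ℝ) (hM : M₁ < M)
    (u : ℝ → Euc n → ℝ) (hu : ∀ ε ∈ Ioo (0:ℝ) ε₀, IsSol k Ω₁ x₀ ε M (u ε)) :
    ∀ K : Set (Euc n), K ⊆ Ω₁ \ {x₀} → IsCompact K →
      TendstoUniformlyOn (fun ε => extendBy (u ε) x₀ ε M) ψ (𝓝[>] (0:ℝ)) K := by
  intro K hK hKc
  have hkn : k + 1 ≤ n := by omega
  have hk0 : (0:ℝ) < k := by exact_mod_cast hk
  set m : ℝ := (n:ℝ) / k with hmdef
  have hm2 : 2 ≤ m := by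
    rw [hmdef, le_div_iff₀ hk0]; exact_mod_cast hnk
  have hmk : m * k ≤ n := by rw [hmdef, div_mul_cancel₀ _ hk0.ne']
  obtain ⟨φ, hφ2, hφd, hφt⟩ := h_barrier m hm2
  have hφmono : ∀ s t : ℝ, 0 < s → s ≤ t → φ s ≤ φ t := by
    intro s t hs hst
    have : MonotoneOn φ (Ioi 0) := by
      apply monotoneOn_of_deriv_nonneg (convex_Ioi 0)
      · intro s hs; exact (hφd s hs).continuousAt.continuousWithinAt
      · intro s hs; rw [interior_Ioi] at hs
        exact (hφd s hs).differentiableAt.differentiableWithinAt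
      · intro s hs; rw [interior_Ioi] at hs
        rw [(hφd s hs).deriv]; exact Real.rpow_nonneg (le_of_lt hs) _
    exact this (mem_Ioi.2 hs) (mem_Ioi.2 (hs.trans_le hst)) hst
  have hcpt : IsCompact (closure Ω₁) := hΩb.isCompact_closure
  have hψc : ContinuousOn ψ (closure Ω₁) := hψ.1.continuousOn
  obtain ⟨R, hR⟩ : ∃ R : ℝ, ∀ x ∈ closure Ω₁, ‖x - x₀‖ ≤ R := by
    obtain ⟨R, hR⟩ := hcpt.isBounded.subset_closedBall x₀
    exact ⟨R, fun x hx => by simpa [dist_eq_norm] using hR hx⟩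
  obtain ⟨B, hB⟩ : ∃ B : ℝ, ∀ x ∈ closure Ω₁, ψ x ≤ B := by
    obtain ⟨B, hB⟩ := (hcpt.image_of_continuousOn hψc).bddAbove
    exact ⟨B, fun x hx => hB (mem_image_of_mem _ hx)⟩
  set C : ℝ := φ (R^2) with hC
  have hφC : ∀ x ∈ closure Ω₁, x ≠ x₀ → φ (‖x - x₀‖^2) ≤ C := by
    intro x hx hne
    have h0 : 0 < ‖x - x₀‖ := norm_pos_iff.2 (sub_ne_zero.2 hne)
    have := hR x hx
    exact hφmono _ _ (by positivity) (by gcongr)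
  set L : ℝ := M + |B| with hL
  have hL0 : 0 < L := by have := abs_nonneg B; linarith
  have hψat : ∀ x ∈ Ω₁, ContDiffAt ℝ 2 ψ x ∧ hG k (hessian ψ x) ∧ hS k (hessian ψ x) = 1 := by
    intro x hx
    have hnb : closure Ω₁ ∈ 𝓝 x := mem_of_superset (hΩo.mem_nhds hx) subset_closure
    have h1 : ContDiffAt ℝ 2 ψ x := (hψ.1.contDiffAt hnb).of_le (by
      have : ((2:ℕ∞) : WithTop ℕ∞) ≤ ((⊤ : ℕ∞) : WithTop ℕ∞) := WithTop.coe_le_coe.2 le_top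
      exact this)
    obtain ⟨h2, h3⟩ := hψ.2.1 x hx
    rw [h_hess_within ψ hnb] at h2 h3
    rw [h_sigma (by omega) (h_hess_herm h1)] at h3
    exact ⟨h1, h_inCone (by omega) h2, h3⟩
  have key : ∀ ε ∈ Ioo (0:ℝ) ε₀, 0 < C - φ (ε^2) → ∀ x ∈ Ω₁ \ closedBall x₀ ε,
      u ε x ≤ ψ x ∧ ψ x + L / (C - φ (ε^2)) * (φ (‖x - x₀‖^2) - C) ≤ u ε x := by
    intro ε hε hpos
    obtain ⟨hu1, hu2, hu3, hu4⟩ := hu ε hε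
    set U : Set (Euc n) := Ω₁ \ closedBall x₀ ε with hU
    have hring : ringSet Ω₁ x₀ ε = closure U := rfl
    rw [hring] at hu1 hu2
    have hUo : IsOpen U := hΩo.sdiff isClosed_closedBall
    have hUb : IsBounded U := hΩb.subset sdiff_subset
    have hUcl : closure U ⊆ closure Ω₁ := closure_mono sdiff_subset
    have hUbd : ∀ x ∈ closure U \ U, x ∈ frontier Ω₁ ∨ (x ∈ sphere x₀ ε ∧ x ∈ closure Ω₁) := by
      rintro x ⟨hx, hxU⟩
      by_cases hxΩ : x ∈ Ω₁
      · right
        refine ⟨?_, hUcl hx⟩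
        have h1 : x ∈ closedBall x₀ ε := by
          by_contra h; exact hxU ⟨hxΩ, h⟩
        have h2 : ε ≤ dist x x₀ := by
          have : closure U ⊆ {y | ε ≤ dist y x₀} := by
            apply closure_minimal
            · intro y hy
              have := hy.2
              rw [mem_closedBall, not_le] at this
              exact this.le
            · exact isClosed_le continuous_const (continuous_id.dist continuous_const)
          exact this hx
        exact le_antisymm h1 h2
      · left
        rw [hΩo.frontier_eq]; exact ⟨hUcl hx, hxΩ⟩
    have hfar : ∀ x ∈ closure U, x ≠ x₀ := by
      have : closure U ⊆ {y | ε ≤ dist y x₀} := by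
        apply closure_minimal
        · intro y hy
          have := hy.2
          rw [mem_closedBall, not_le] at this
          exact this.le
        · exact isClosed_le continuous_const (continuous_id.dist continuous_const)
      rintro x hx rfl
      have := this hx
      simp at this
      linarith [hε.1]
    have huat : ∀ x ∈ U, ContDiffAt ℝ 2 (u ε) x ∧ hG k (hessian (u ε) x) ∧
        hS k (hessian (u ε) x) = 1 := by
      intro x hx
      have hnb : closure U ∈ 𝓝 x := mem_of_superset (hUo.mem_nhds hx) subset_closure
      have h1 : ContDiffAt ℝ 2 (u ε) x := hu1.contDiffAt hnb
      obtain ⟨h2, h3⟩ := hu2 x hx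
      rw [h_hess_within (u ε) hnb] at h2 h3
      rw [h_sigma (by omega) (h_hess_herm h1)] at h3
      exact ⟨h1, h_inCone (by omega) h2, h3⟩
    have hψU : ContinuousOn ψ (closure U) := hψc.mono hUcl
    have hup := h_compare hk hkn hUo hUb hu1.continuousOn hψU
      (fun x hx => (huat x hx).1) (fun x hx => (hψat x hx.1).1)
      (fun x hx => ⟨(huat x hx).2.1, (huat x hx).2.2.ge⟩)
      (fun x hx => (hψat x hx.1).2.2.le)
      (by
        intro x hx
        rcases hUbd x hx with h | ⟨h, h'⟩
        · rw [hu3 x h, hψ.2.2 x h]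
        · rw [hu4 x h]; linarith [hM₁ψ x h'])
    set δ : ℝ := L / (C - φ (ε^2)) with hδ
    have hδ0 : 0 < δ := div_pos hL0 hpos
    have hsp : ∀ x : Euc n, x ≠ x₀ → 0 < ‖x - x₀‖^2 := fun x hx => by
      have : 0 < ‖x - x₀‖ := norm_pos_iff.2 (sub_ne_zero.2 hx)
      positivity
    set Φ : ℝ → ℝ := fun s => δ * (φ s - C) with hΦ
    have hΦ2 : ∀ s, 0 < s → ContDiffAt ℝ 2 Φ s := fun s hs =>
      contDiffAt_const.mul ((hφ2 s hs).sub contDiffAt_const)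
    have hr2 : ∀ x : Euc n, x ≠ x₀ → ContDiffAt ℝ 2 (fun y : Euc n => Φ (‖y - x₀‖^2)) x := by
      intro x hx
      have : ContDiff ℝ 2 (fun y : Euc n => ‖y - x₀‖^2) :=
        (contDiff_id.sub contDiff_const).norm_sq ℝ
      exact ContDiffAt.comp (g := Φ) (f := fun y : Euc n => ‖y - x₀‖^2) x (hΦ2 _ (hsp x hx)) this.contDiffAt
    have hlow := h_compare (f := fun x => ψ x + Φ (‖x - x₀‖^2)) (g := u ε) hk hkn hUo hUb
      (hψU.add fun x hx => (hr2 x (hfar x hx)).continuousAt.continuousWithinAt)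
      hu1.continuousOn
      (fun x hx => (hψat x hx.1).1.add (hr2 x (hfar x (subset_closure hx))))
      (fun x hx => (huat x hx).1)
      (by
        intro x hx
        have hxne := hfar x (subset_closure hx)
        have hs0 := hsp x hxne
        obtain ⟨a1, a2, a3⟩ := hψat x hx.1
        rw [h_hess_add a1 (hr2 x hxne)]
        have hrad := h_radial (φ := Φ) (φ1 := fun s => δ * s ^ (-m/2))
          (φ2 := δ * ((-m/2) * (‖x - x₀‖^2) ^ (-m/2 - 1))) (x := x) (x₀ := x₀)
          (by
            filter_upwards [lt_mem_nhds hs0] with s hs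
            exact ((hφd s hs).sub_const C).const_mul δ)
          ((Real.hasDerivAt_rpow_const (Or.inl hs0.ne')).const_mul δ)
        rw [hrad]
        set s : ℝ := ‖x - x₀‖^2 with hs
        have hv : ∑ i, ((fun i => (x - x₀) i / ‖x - x₀‖) i)^2 = 1 := by
          simp only [div_pow]
          rw [← Finset.sum_div, ← hs, div_eq_one_iff_eq hs0.ne', hs, EuclideanSpace.real_norm_sq_eq]
        have hcone := hG_cone hkn a2 (fun i => (x - x₀) i / ‖x - x₀‖) hv m (2 * δ * s ^ (-m/2))
          (by positivity) (by linarith) hmk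
        have heq : hessian ψ x + ((2 * (δ * s ^ (-m/2))) • (1 : Matrix (Fin n) (Fin n) ℝ) +
            (4 * (δ * ((-m/2) * s ^ (-m/2 - 1)))) •
              Matrix.vecMulVec (x - x₀).ofLp (x - x₀).ofLp) =
            hessian ψ x + (2 * δ * s ^ (-m/2)) • (1 : Matrix (Fin n) (Fin n) ℝ) +
            (-(m * (2 * δ * s ^ (-m/2)))) • Matrix.vecMulVec
              (fun i => (x - x₀) i / ‖x - x₀‖) (fun i => (x - x₀) i / ‖x - x₀‖) := by
          rw [add_assoc, ← mul_assoc 2 δ]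
          congr 2
          ext i j
          simp only [Matrix.smul_apply, Matrix.vecMulVec_apply, smul_eq_mul]
          have hq : (x - x₀).ofLp i / ‖x - x₀‖ * ((x - x₀).ofLp j / ‖x - x₀‖) =
              (x - x₀).ofLp i * (x - x₀).ofLp j / s := by
            rw [_root_.div_mul_div_comm, ← sq]
          rw [Real.rpow_sub_one hs0.ne', hq]
          generalize s ^ (-m/2) = P
          field_simp
          ring
        rw [heq]
        exact ⟨hcone.1, a3.ge.trans (hcone.2 k le_rfl)⟩)
      (fun x hx => (huat x hx).2.2.le)
      (by
        intro x hx
        have hxne := hfar x hx.1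
        rcases hUbd x hx with h | ⟨h, h'⟩
        · rw [hu3 x h, hψ.2.2 x h]
          have := hφC x (hUcl hx.1) hxne
          have : δ * (φ (‖x - x₀‖^2) - C) ≤ 0 :=
            mul_nonpos_of_nonneg_of_nonpos hδ0.le (by linarith)
          simpa [hΦ] using this
        · rw [hu4 x h]
          have h1 : ‖x - x₀‖ = ε := by simpa [dist_eq_norm] using h
          have h2 : δ * (φ (ε^2) - C) = -L := by
            rw [hδ]; field_simp; ring
          simp only [hΦ, h1, h2]
          have := hB x h'
          have := le_abs_self B
          linarith)
    intro x hx
    exact ⟨hup x hx, hlow x hx⟩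
  have hsq : Tendsto (fun ε : ℝ => ε^2) (𝓝[>] 0) (𝓝[>] 0) := by
    apply tendsto_nhdsWithin_of_tendsto_nhds_of_eventually_within
    · have : Tendsto (fun ε : ℝ => ε^2) (𝓝 0) (𝓝 (0^2)) := (continuous_pow 2).tendsto 0
      rw [zero_pow two_ne_zero] at this
      exact this.mono_left nhdsWithin_le_nhds
    · filter_upwards [self_mem_nhdsWithin] with ε hε
      have : (0:ℝ) < ε := hε
      exact mem_Ioi.2 (by positivity)
  have hden : Tendsto (fun ε : ℝ => C - φ (ε^2)) (𝓝[>] 0) atTop := by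
    simp only [sub_eq_add_neg]
    exact tendsto_atTop_add_const_left _ C (tendsto_neg_atBot_atTop.comp (hφt.comp hsq))
  obtain ⟨ρ, hρ0, hρ⟩ : ∃ ρ : ℝ, 0 < ρ ∧ ∀ x ∈ K, ρ ≤ ‖x - x₀‖ := by
    rcases K.eq_empty_or_nonempty with rfl | hne
    · exact ⟨1, one_pos, by simp⟩
    · obtain ⟨y, hy, hmin⟩ := hKc.exists_isMinOn hne
        (f := fun x => ‖x - x₀‖) (by fun_prop)
      refine ⟨‖y - x₀‖, norm_pos_iff.2 (sub_ne_zero.2 (hK hy).2), fun x hx => hmin hx⟩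
  have hlim : Tendsto (fun ε : ℝ => L / (C - φ (ε^2)) * (C - φ (ρ^2))) (𝓝[>] 0) (𝓝 0) := by
    have := (hden.const_div_atTop L).mul_const (C - φ (ρ^2))
    simpa using this
  rw [Metric.tendstoUniformlyOn_iff]
  intro e he
  have hε₀' : ∀ᶠ ε in 𝓝[>] (0:ℝ), ε ∈ Ioo (0:ℝ) ε₀ := Ioo_mem_nhdsGT hε₀
  have hρ' : ∀ᶠ ε in 𝓝[>] (0:ℝ), ε ∈ Ioo (0:ℝ) ρ := Ioo_mem_nhdsGT hρ0
  filter_upwards [hε₀', hρ', hden.eventually_gt_atTop 0, hlim.eventually_lt_const he]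
    with ε h1 h2 h3 h4 x hx
  have hxρ := hρ x hx
  have hxb : x ∉ closedBall x₀ ε := by
    rw [mem_closedBall, dist_eq_norm, not_le]; exact h2.2.trans_le hxρ
  obtain ⟨k1, k2⟩ := key ε h1 h3 x ⟨(hK hx).1, hxb⟩
  have hext : extendBy (u ε) x₀ ε M x = u ε x := by
    simp only [extendBy]; exact if_neg hxb
  rw [hext, Real.dist_eq, abs_of_nonneg (by linarith)]
  have hd0 : 0 ≤ L / (C - φ (ε^2)) := (div_pos hL0 h3).le
  have h5 : φ (ρ^2) ≤ φ (‖x - x₀‖^2) := hφmono _ _ (by positivity) (by gcongr)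
  have h6 := mul_le_mul_of_nonneg_left h5 hd0
  nlinarith
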